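/- Let E ⊂ ℝ have finite measure, let f be measurable with |f| ≤ 1 and f supported on E, and let 𝐏 be a finite collection of quartiles. Then for j ∈ {1,2,3}, size_j((⟨f, φ_{P_j}⟩)_{P∈𝐏}) ≲ sup_{P∈𝐏} |E ∩ I_P|/|I_P|, with an absolute implicit constant. -/

import Mathlib

open MeasureTheory Set

/-- The Walsh functions `w_l : ℝ → ℝ`, defined recursively by
`w_0 = χ_{[0,1)}`, `w_{2l}(x) = w_l(2x) + w_l(2x−1)`,
`w_{2l+1}(x) = w_l(2x) − w_l(2x−1)`. -/
noncomputable def walsh : ℕ → ℝ → ℝ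
  | 0, x => if x ∈ Set.Ico (0:ℝ) 1 then 1 else 0
  | (n+1), x =>
      if (n+1) % 2 = 0 then walsh ((n+1)/2) (2*x) + walsh ((n+1)/2) (2*x - 1)
      else walsh ((n+1)/2) (2*x) - walsh ((n+1)/2) (2*x - 1)
  decreasing_by all_goals exact Nat.div_lt_self (Nat.succ_pos n) one_lt_two

/-- A tile `[2^{-k}n, 2^{-k}(n+1)) × [2^k l, 2^k(l+1))`:
a half-open dyadic rectangle of area one. -/
structure Tile where
  k : ℤ
  n : ℤ
  l : ℤ
deriving DecidableEq

namespace Tile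

/-- The time interval `I_P = [2^{-k}n, 2^{-k}(n+1))` of a tile. -/
noncomputable def I (p : Tile) : Set ℝ := Set.Ico ((2:ℝ)^(-p.k) * p.n) ((2:ℝ)^(-p.k) * (p.n+1))

/-- The frequency interval `ω_P = [2^k l, 2^k(l+1))` of a tile. -/
noncomputable def freq (p : Tile) : Set ℝ := Set.Ico ((2:ℝ)^(p.k) * p.l) ((2:ℝ)^(p.k) * (p.l+1))

/-- The tile as a subset `I_P × ω_P` of the time-frequency plane. -/
noncomputable def area (p : Tile) : Set (ℝ × ℝ) := p.I ×ˢ p.freq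

/-- The length `|I_P| = 2^{-k}` of the time interval of a tile. -/
noncomputable def len (p : Tile) : ℝ := (2:ℝ)^(-p.k)

/-- The center `ξ_P` of the frequency interval of a tile. -/
noncomputable def ξ (p : Tile) : ℝ := (2:ℝ)^(p.k) * ((p.l : ℝ) + 1/2)

/-- The tile order: `p < q` iff `I_p ⊊ I_q` and `ω_q ⊆ ω_p`. -/
def lt (p q : Tile) : Prop := p.I ⊂ q.I ∧ q.freq ⊆ p.freq

/-- `p ≤ q` iff `p < q` or `p = q`. -/
def le (p q : Tile) : Prop := Tile.lt p q ∨ p = q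

/-- The Walsh wave packet `φ_P(x) = 2^{k/2} w_l(2^k x − n)` of a tile. -/
noncomputable def wp (p : Tile) : ℝ → ℝ :=
  fun x => Real.sqrt ((2:ℝ)^(p.k)) * walsh p.l.toNat ((2:ℝ)^(p.k) * x - p.n)

end Tile

/-- A quartile `[2^{-k}n, 2^{-k}(n+1)) × [2^{k+2}l, 2^{k+2}(l+1))`:
a dyadic rectangle of area four. -/
structure Quartile where
  k : ℤ
  n : ℤ
  l : ℤ
deriving DecidableEq

namespace Quartile

/-- The time interval `I_P` of a quartile. -/
noncomputable def I (P : Quartile) : Set ℝ := Set.Ico ((2:ℝ)^(-P.k) * P.n) ((2:ℝ)^(-P.k) * (P.n+1))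

/-- The length `|I_P| = 2^{-k}` of the time interval of a quartile. -/
noncomputable def len (P : Quartile) : ℝ := (2:ℝ)^(-P.k)

/-- The `j`-th sub-tile `P_j = I_P × [2^k(4l+j−1), 2^k(4l+j))` of a quartile,
for `j = 1, 2, 3`. -/
def tile (P : Quartile) (j : ℕ) : Tile := ⟨P.k, P.n, 4*P.l + ((j - 1 : ℕ) : ℤ)⟩

end Quartile

/-- `T` is an `i`-tree with top `top`: `P_i ≤ top_i` for all `P ∈ T`. -/
def IsTree (i : ℕ) (top : Quartile) (T : Finset Quartile) : Prop :=
  ∀ P ∈ T, Tile.le (P.tile i) (top.tile i)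

/-- `size_j((a_P)_{P∈Ps})`: the sup over trees `T ⊆ Ps` which are `i`-trees for
some `i ≠ j` of `(|I_T|⁻¹ Σ_{P∈T} |a_{P_j}|²)^{1/2}`. -/
noncomputable def size (Ps : Finset Quartile) (j : ℕ) (a : Quartile → ℂ) : ℝ :=
  sSup ((fun p : Quartile × Finset Quartile =>
      Real.sqrt ((∑ P ∈ p.2, ‖a P‖^2) / p.1.len)) ''
    {p | p.2 ⊆ Ps ∧ ∃ i ∈ ({1,2,3} : Set ℕ), i ≠ j ∧ IsTree i p.1 p.2})

/-- `energy_j((a_P)_{P∈Ps})`: the sup over subsets `D ⊆ Ps` with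
`{P_j : P ∈ D}` pairwise disjoint of `(Σ_{P∈D} |a_{P_j}|²)^{1/2}`. -/
noncomputable def energy (Ps : Finset Quartile) (j : ℕ) (a : Quartile → ℂ) : ℝ :=
  sSup ((fun D : Finset Quartile => Real.sqrt (∑ P ∈ D, ‖a P‖^2)) ''
    {D | D ⊆ Ps ∧ ∀ P ∈ D, ∀ P' ∈ D, P ≠ P' →
      Disjoint (P.tile j).area (P'.tile j).area})

/-- The `L^{1,∞}(I)` quasinorm `sup_{λ>0} λ |{x ∈ I : |g(x)| > λ}|`. -/
noncomputable def weakL1 (g : ℝ → ℝ) (I : Set ℝ) : ℝ :=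
  sSup {r | ∃ lam : ℝ, 0 < lam ∧ r = lam * (volume {x ∈ I | lam < |g x|}).toReal}

/-- The square function `(Σ_{P∈T} |a_{P_j}|² χ_{I_P}/|I_P|)^{1/2}` of a tree. -/
noncomputable def treeFn (T : Finset Quartile) (a : Quartile → ℂ) : ℝ → ℝ :=
  fun x => Real.sqrt (∑ P ∈ T, ‖a P‖^2 * (P.I.indicator (fun _ => (1:ℝ)) x) / P.len)

/-! ### Walsh functions -/

lemma walsh_step (L : ℕ) (x : ℝ) :
    walsh L x = walsh (L/2) (2*x) + (-1)^L * walsh (L/2) (2*x-1) := by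
  rcases L with _ | n
  · simp only [Nat.zero_div, walsh, pow_zero, one_mul, Set.mem_Ico]
    split_ifs <;> first | (norm_num; done) | (exfalso; grind)
  · rw [walsh]
    split_ifs with h
    · have : Even (n+1) := Nat.even_iff.2 h
      rw [this.neg_one_pow]; ring
    · have : Odd (n+1) := Nat.odd_iff.2 (by omega)
      rw [this.neg_one_pow]; ring

lemma walsh_out (L : ℕ) : ∀ x : ℝ, x ∉ Set.Ico (0:ℝ) 1 → walsh L x = 0 := by
  induction L using Nat.strong_induction_on with
  | _ L ih =>
    intro x hx
    rcases Nat.eq_zero_or_pos L with h | h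
    · subst h; simp only [walsh, if_neg hx]
    · have hl : L/2 < L := Nat.div_lt_self h one_lt_two
      simp only [Set.mem_Ico, not_and_or, not_le, not_lt] at hx
      rw [walsh_step, ih _ hl, ih _ hl]
      · simp
      · simp only [Set.mem_Ico, not_and_or, not_le, not_lt]
        rcases hx with hx | hx
        · left; linarith
        · right; linarith
      · simp only [Set.mem_Ico, not_and_or, not_le, not_lt]
        rcases hx with hx | hx
        · left; linarith
        · right; linarith

/-- one step of the recursion on the half of index `b`. -/
lemma walsh_half (L : ℕ) (b : ℕ) (hb : b = 0 ∨ b = 1) : ∃ s : ℝ, |s| = 1 ∧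
    ∀ y : ℝ, 2*y - b ∈ Set.Ico (0:ℝ) 1 → walsh L y = s * walsh (L/2) (2*y - b) := by
  rcases hb with rfl | rfl
  · refine ⟨1, by simp, fun y hy => ?_⟩
    rw [walsh_step, walsh_out (L/2) (2*y-1)]
    · simp
    · simp only [Set.mem_Ico, Nat.cast_zero] at hy ⊢
      intro h; linarith
  · refine ⟨(-1)^L, by simp, fun y hy => ?_⟩
    rw [walsh_step, walsh_out (L/2) (2*y)]
    · simp
    · simp only [Set.mem_Ico, Nat.cast_one] at hy ⊢
      intro h; linarith

lemma walsh_restrict (d : ℕ) : ∀ (L r : ℕ), r < 2^d → ∃ s : ℝ, |s| = 1 ∧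
    ∀ y : ℝ, 2^d*y - r ∈ Set.Ico (0:ℝ) 1 → walsh L y = s * walsh (L/2^d) (2^d*y - r) := by
  induction d with
  | zero =>
    intro L r hr
    have : r = 0 := by simpa using hr
    subst this
    exact ⟨1, by simp, fun y hy => by simp⟩
  | succ d ih =>
    intro L r hr
    obtain ⟨b, r', hb, hr', hrr⟩ : ∃ b r' : ℕ, (b = 0 ∨ b = 1) ∧ r' < 2^d ∧ r = b*2^d + r' := by
      rw [pow_succ] at hr
      by_cases h : r < 2^d
      · exact ⟨0, r, by simp, h, by simp⟩
      · exact ⟨1, r - 2^d, by simp, by omega, by omega⟩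
    obtain ⟨s, hs, h1⟩ := walsh_half L b hb
    obtain ⟨t, ht, h2⟩ := ih (L/2) r' hr'
    refine ⟨s*t, by rw [abs_mul, hs, ht, one_mul], fun y hy => ?_⟩
    have e : (2:ℝ)^(d+1)*y - r = 2^d*(2*y-b) - r' := by
      rw [hrr]; push_cast; ring
    rw [e] at hy ⊢
    have hpos : (0:ℝ) < 2^d := by positivity
    have hr1 : (r':ℝ) + 1 ≤ 2^d := by exact_mod_cast hr'
    have hr0 : (0:ℝ) ≤ r' := by positivity
    have hy2 : 2*y - b ∈ Set.Ico (0:ℝ) 1 := by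
      obtain ⟨ha, hc⟩ := hy
      constructor
      · by_contra hneg
        push Not at hneg
        nlinarith
      · by_contra hneg
        push Not at hneg
        nlinarith
    rw [h1 y hy2, h2 _ hy, Nat.div_div_eq_div_mul, ← pow_succ', mul_assoc]

lemma walsh_abs (L : ℕ) : ∀ x : ℝ, x ∈ Set.Ico (0:ℝ) 1 → |walsh L x| = 1 := by
  induction L using Nat.strong_induction_on with
  | _ L ih =>
    intro x hx
    rcases Nat.eq_zero_or_pos L with h | h
    · subst h; simp only [walsh, if_pos hx, abs_one]
    · have hl : L/2 < L := Nat.div_lt_self h one_lt_two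
      obtain ⟨hx0, hx1⟩ := hx
      by_cases h2 : x < 1/2
      · obtain ⟨s, hs, h1⟩ := walsh_half L 0 (by simp)
        have : 2*x - (0:ℕ) ∈ Set.Ico (0:ℝ) 1 := by
          constructor <;> push_cast <;> linarith
        rw [h1 x this, abs_mul, hs, ih _ hl _ this, one_mul]
      · obtain ⟨s, hs, h1⟩ := walsh_half L 1 (by simp)
        have : 2*x - (1:ℕ) ∈ Set.Ico (0:ℝ) 1 := by
          constructor <;> push_cast <;> linarith
        rw [h1 x this, abs_mul, hs, ih _ hl _ this, one_mul]

lemma walsh_le_one (L : ℕ) (x : ℝ) : |walsh L x| ≤ 1 := by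
  by_cases h : x ∈ Set.Ico (0:ℝ) 1
  · exact (walsh_abs L x h).le
  · rw [walsh_out L x h]; simp

lemma walsh_meas (L : ℕ) : Measurable (walsh L) := by
  induction L using Nat.strong_induction_on with
  | _ L ih =>
    rcases Nat.eq_zero_or_pos L with h | h
    · subst h
      have : walsh 0 = fun x => if x ∈ Set.Ico (0:ℝ) 1 then (1:ℝ) else 0 := by
        funext x; simp only [walsh]
      rw [this]
      exact Measurable.ite measurableSet_Ico measurable_const measurable_const
    · have hl : L/2 < L := Nat.div_lt_self h one_lt_two
      have : walsh L = fun x => walsh (L/2) (2*x) + (-1)^L * walsh (L/2) (2*x-1) := by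
        funext x; exact walsh_step L x
      rw [this]
      have := ih _ hl
      fun_prop

lemma integrable_of_bdd_supp {g : ℝ → ℝ} (hg : Measurable g) {S : Set ℝ} (hS : MeasurableSet S)
    (hS' : volume S ≠ ⊤) {M : ℝ} (hM : ∀ x, |g x| ≤ M) (h0 : ∀ x, x ∉ S → g x = 0) :
    Integrable g := by
  have h : IntegrableOn g S := by
    refine Measure.integrableOn_of_bounded (M := M) hS' hg.aestronglyMeasurable ?_
    exact Filter.Eventually.of_forall (fun x => by simpa using hM x)
  have e : S.indicator g = g := by
    funext x
    by_cases hx : x ∈ S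
    · simp [hx]
    · simp [hx, h0 x hx]
  rw [← e]
  exact h.integrable_indicator hS

lemma walsh_mul_integrable (m n : ℕ) : Integrable (fun x => walsh m x * walsh n x) := by
  refine integrable_of_bdd_supp ((walsh_meas m).mul (walsh_meas n)) (S := Set.Ico 0 1)
    measurableSet_Ico (by simp) (M := 1) ?_ ?_
  · intro x
    rw [abs_mul]
    exact mul_le_one₀ (walsh_le_one m x) (abs_nonneg _) (walsh_le_one n x)
  · intro x hx
    rw [walsh_out m x hx, zero_mul]

lemma walsh_orth (N : ℕ) : ∀ m n : ℕ, m + n = N → m ≠ n →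
    ∫ x, walsh m x * walsh n x = 0 := by
  induction N using Nat.strong_induction_on with
  | _ N ih =>
    intro m n hN hmn
    have key : ∀ x, walsh m x * walsh n x =
        (fun y => walsh (m/2) y * walsh (n/2) y) (2*x) +
        (-1)^(m+n) * (fun y => walsh (m/2) (y - 1) * walsh (n/2) (y-1)) (2*x) := by
      intro x
      have hc : ∀ a b : ℕ, walsh a (2*x) * walsh b (2*x-1) = 0 := by
        intro a b
        by_cases h : 2*x ∈ Set.Ico (0:ℝ) 1
        · rw [walsh_out b (2*x-1), mul_zero]
          simp only [Set.mem_Ico] at h ⊢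
          intro h'; linarith
        · rw [walsh_out a _ h, zero_mul]
      rw [walsh_step m, walsh_step n]
      have e1 := hc (m/2) (n/2)
      have e2 := hc (n/2) (m/2)
      simp only [pow_add]
      linear_combination (-1)^n * e1 + (-1)^m * e2
    have i1 := walsh_mul_integrable (m/2) (n/2)
    have i2 : Integrable (fun y => walsh (m/2) (y - 1) * walsh (n/2) (y-1)) := i1.comp_sub_right 1
    simp_rw [key]
    rw [integral_add (i1.comp_mul_left' (by norm_num)) ((i2.comp_mul_left' (by norm_num)).const_mul _),
      integral_const_mul, Measure.integral_comp_mul_left (fun y => walsh (m/2) y * walsh (n/2) y),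
      Measure.integral_comp_mul_left (fun y => walsh (m/2) (y-1) * walsh (n/2) (y-1)),
      integral_sub_right_eq_self (fun y => walsh (m/2) y * walsh (n/2) y) 1]
    by_cases h : m/2 = n/2
    · have : Odd (m+n) := by rw [Nat.odd_iff]; omega
      rw [this.neg_one_pow]; ring
    · rw [ih (m/2 + n/2) (by omega) _ _ rfl h]; simp

/-! ### An abstract John-Nirenberg type argument -/

open Classical in
/-- Carleson packing: sums over a sub-collection are controlled by the measure of a set
containing all the maximal intervals. -/
lemma carleson_pack {ι : Type*} (T B : Finset ι) (hBT : B ⊆ T) (I : ι → Set ℝ) (len c : ι → ℝ)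
    (hI : ∀ P ∈ T, MeasurableSet (I P)) (hlen : ∀ P ∈ T, volume (I P) = ENNReal.ofReal (len P))
    (hpos : ∀ P ∈ T, 0 < len P)
    (hmono : ∀ P ∈ T, ∀ Q ∈ T, I P ⊂ I Q → len P < len Q)
    (hnest : ∀ P ∈ T, ∀ Q ∈ T, P ≠ Q → Disjoint (I P) (I Q) ∨ I P ⊂ I Q ∨ I Q ⊂ I P)
    (hc : ∀ P ∈ T, 0 ≤ c P) (M : ℝ) (hM0 : 0 ≤ M)
    (hM : ∀ Q ∈ T, ∑ P ∈ T with I P ⊆ I Q, c P ≤ M * len Q)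
    (U : Set ℝ) (hU : volume U ≠ ⊤)
    (hBU : ∀ P ∈ B, (∀ Q ∈ B, ¬ I P ⊂ I Q) → I P ⊆ U) :
    ∑ P ∈ B, c P ≤ M * (volume U).toReal := by
  set Bm := B.filter (fun P => ∀ Q ∈ B, ¬ I P ⊂ I Q) with hBm
  have hBmT : ∀ P ∈ Bm, P ∈ T := fun P hP => hBT (Finset.mem_filter.1 hP).1
  have hmax : ∀ P ∈ B, ∃ Q ∈ Bm, I P ⊆ I Q := by
    intro P hP
    obtain ⟨Q, hQ, hQm⟩ := Finset.exists_max_image (B.filter (fun Q => I P ⊆ I Q)) len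
      ⟨P, by simp [hP]⟩
    rw [Finset.mem_filter] at hQ
    refine ⟨Q, ?_, hQ.2⟩
    rw [hBm, Finset.mem_filter]
    refine ⟨hQ.1, fun R hR hQR => ?_⟩
    have h1 := hQm R (by simp [hR, hQ.2.trans hQR.subset])
    have h2 := hmono Q (hBT hQ.1) R (hBT hR) hQR
    linarith
  have h1 : ∑ P ∈ B, c P ≤ ∑ Q ∈ Bm, ∑ P ∈ T with I P ⊆ I Q, c P := by
    calc ∑ P ∈ B, c P ≤ ∑ P ∈ Bm.biUnion (fun Q => T.filter (fun P => I P ⊆ I Q)), c P := by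
          apply Finset.sum_le_sum_of_subset_of_nonneg
          · intro P hP
            obtain ⟨Q, hQ, hPQ⟩ := hmax P hP
            exact Finset.mem_biUnion.2 ⟨Q, hQ, Finset.mem_filter.2 ⟨hBT hP, hPQ⟩⟩
          · intro P hP _
            obtain ⟨Q, hQ, hPQ⟩ := Finset.mem_biUnion.1 hP
            exact hc P (Finset.mem_filter.1 hPQ).1
      _ ≤ _ := by
          have hdisj : Set.PairwiseDisjoint (Bm : Set ι) (fun Q => T.filter (fun P => I P ⊆ I Q)) := by
            intro Q hQ R hR hQR
            rw [Function.onFun, Finset.disjoint_left]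
            intro P hP hP'
            rw [Finset.mem_filter] at hP hP'
            have hQ' := Finset.mem_filter.1 (Finset.mem_coe.1 hQ)
            have hR' := Finset.mem_filter.1 (Finset.mem_coe.1 hR)
            rcases hnest Q (hBT hQ'.1) R (hBT hR'.1) hQR with h | h | h
            · have he : I P = ∅ := disjoint_self.1 (h.mono hP.2 hP'.2)
              have := hlen P hP.1
              rw [he, measure_empty] at this
              have h0 := ENNReal.ofReal_pos.2 (hpos P hP.1)
              rw [← this] at h0
              exact lt_irrefl _ h0
            · exact hQ'.2 R hR'.1 h
            · exact hR'.2 Q hQ'.1 h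
          rw [Finset.sum_biUnion hdisj]
  have h2 : ∑ Q ∈ Bm, len Q ≤ (volume U).toReal := by
    have hd : Set.PairwiseDisjoint (Bm : Set ι) I := by
      intro Q hQ R hR hQR
      have hQ' := Finset.mem_filter.1 (Finset.mem_coe.1 hQ)
      have hR' := Finset.mem_filter.1 (Finset.mem_coe.1 hR)
      rcases hnest Q (hBT hQ'.1) R (hBT hR'.1) hQR with h | h | h
      · exact h
      · exact absurd h (hQ'.2 R hR'.1)
      · exact absurd h (hR'.2 Q hQ'.1)
    have h3 := measure_biUnion_finset (μ := volume) hd (fun P hP => hI P (hBmT P hP))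
    have h4 : volume (⋃ Q ∈ Bm, I Q) ≤ volume U := by
      apply measure_mono
      apply Set.iUnion₂_subset
      intro P hP
      exact hBU P (Finset.mem_filter.1 hP).1 (Finset.mem_filter.1 hP).2
    have h5 : ∑ Q ∈ Bm, volume (I Q) = ENNReal.ofReal (∑ Q ∈ Bm, len Q) := by
      rw [ENNReal.ofReal_sum_of_nonneg (fun P hP => (hpos P (hBmT P hP)).le)]
      exact Finset.sum_congr rfl (fun P hP => hlen P (hBmT P hP))
    rw [h3, h5] at h4
    exact (ENNReal.ofReal_le_iff_le_toReal hU).1 h4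
  calc ∑ P ∈ B, c P ≤ ∑ Q ∈ Bm, ∑ P ∈ T with I P ⊆ I Q, c P := h1
    _ ≤ ∑ Q ∈ Bm, M * len Q := Finset.sum_le_sum (fun Q hQ => hM Q (hBmT Q hQ))
    _ = M * ∑ Q ∈ Bm, len Q := by rw [Finset.mul_sum]
    _ ≤ _ := mul_le_mul_of_nonneg_left h2 hM0

open Classical in
lemma stopping_bound {ι : Type*} (T : Finset ι) (I : ι → Set ℝ) (len : ι → ℝ) (φ : ι → ℝ → ℝ)
    (hI : ∀ P ∈ T, MeasurableSet (I P)) (hlen : ∀ P ∈ T, volume (I P) = ENNReal.ofReal (len P))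
    (hpos : ∀ P ∈ T, 0 < len P)
    (hmono : ∀ P ∈ T, ∀ Q ∈ T, I P ⊂ I Q → len P < len Q)
    (hnest : ∀ P ∈ T, ∀ Q ∈ T, P ≠ Q → Disjoint (I P) (I Q) ∨ I P ⊂ I Q ∨ I Q ⊂ I P)
    (hφm : ∀ P ∈ T, Measurable (φ P))
    (hφ0 : ∀ P ∈ T, ∀ x, x ∉ I P → φ P x = 0)
    (hφ1 : ∀ P ∈ T, ∀ x ∈ I P, φ P x ^ 2 = 1 / len P)
    (horth : ∀ P ∈ T, ∀ Q ∈ T, P ≠ Q → ∫ x, φ P x * φ Q x = 0)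
    (hconst : ∀ P ∈ T, ∀ x ∈ I P, ∀ y ∈ I P, ∃ e : ℝ, |e| = 1 ∧
      ∀ Q ∈ T, I P ⊂ I Q → φ Q x = e * φ Q y)
    (E : Set ℝ) (hE : MeasurableSet E) (hEfin : volume E ≠ ⊤)
    (f : ℝ → ℝ) (hf : Measurable f) (hf1 : ∀ x, |f x| ≤ 1) (hfE : ∀ x, x ∉ E → f x = 0)
    (a : ι → ℝ) (ha : ∀ P ∈ T, a P = ∫ x, f x * φ P x)
    (A : ℝ) (hA0 : 0 ≤ A)
    (hA : ∀ Q ∈ T, ∑ P ∈ T with I P ⊆ I Q, a P ^ 2 ≤ A ^ 2 * len Q)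
    (J : Set ℝ) (hJm : MeasurableSet J) (hJ : ∀ P ∈ T, I P ⊆ J) :
    ∑ P ∈ T, a P ^ 2 ≤ 4 * A * (volume (E ∩ J)).toReal := by
  set g : ι → ℝ → ℝ := fun S x => ∑ R ∈ T with I S ⊂ I R, a R * φ R x with hg
  set good : ι → Prop := fun P => ∀ Q ∈ T, I P ⊆ I Q → ∀ x ∈ I Q, |g Q x| ≤ A with hgood
  set G := T.filter good with hG
  set B := T.filter (fun P => ¬ good P) with hB
  have hGT : G ⊆ T := Finset.filter_subset _ _
  have hBT : B ⊆ T := Finset.filter_subset _ _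
  set h : ℝ → ℝ := fun x => ∑ P ∈ G, a P * φ P x with hh
  have hgoodup : ∀ P ∈ T, ∀ Q ∈ T, I P ⊆ I Q → good P → good Q := by
    intro P hP Q hQ hPQ hgP R hR hQR
    exact hgP R hR (hPQ.trans hQR)
  -- bounds for φ
  have hφle : ∀ P ∈ T, ∀ x, |φ P x| ≤ 1 + 1 / len P := by
    intro P hP x
    have hl : 0 ≤ 1 / len P := by have := hpos P hP; positivity
    by_cases hx : x ∈ I P
    · have h1 := hφ1 P hP x hx
      rw [← sq_abs] at h1
      nlinarith [abs_nonneg (φ P x), sq_nonneg (|φ P x| - 1)]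
    · rw [hφ0 P hP x hx]; simp; have := hpos P hP; positivity
  have hfin : ∀ P ∈ T, volume (I P) ≠ ⊤ := fun P hP => by rw [hlen P hP]; simp
  have hint_f : ∀ P ∈ T, Integrable (fun x => f x * φ P x) := by
    intro P hP
    refine integrable_of_bdd_supp (hf.mul (hφm P hP)) (hI P hP) (hfin P hP)
      (M := 1 + 1 / len P) ?_ ?_
    · intro x
      rw [abs_mul]
      nlinarith [hf1 x, hφle P hP x, abs_nonneg (φ P x)]
    · intro x hx; rw [hφ0 P hP x hx, mul_zero]
  have hint_φ : ∀ P ∈ T, ∀ Q ∈ T, Integrable (fun x => φ P x * φ Q x) := by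
    intro P hP Q hQ
    refine integrable_of_bdd_supp ((hφm P hP).mul (hφm Q hQ)) (hI P hP) (hfin P hP)
      (M := (1 + 1 / len P) * (1 + 1 / len Q)) ?_ ?_
    · intro x
      rw [abs_mul]
      exact mul_le_mul (hφle P hP x) (hφle Q hQ x) (abs_nonneg _)
        (le_trans (abs_nonneg _) (hφle P hP x))
    · intro x hx; rw [hφ0 P hP x hx, zero_mul]
  have hnorm : ∀ P ∈ T, ∫ x, φ P x * φ P x = 1 := by
    intro P hP
    have e : (fun x => φ P x * φ P x) = (I P).indicator (fun _ => 1 / len P) := by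
      funext x
      by_cases hx : x ∈ I P
      · rw [Set.indicator_of_mem hx, ← hφ1 P hP x hx]; ring
      · rw [Set.indicator_of_notMem hx, hφ0 P hP x hx]; ring
    rw [e, integral_indicator (hI P hP), setIntegral_const, measureReal_def, hlen P hP,
      ENNReal.toReal_ofReal (hpos P hP).le]
    have := (hpos P hP).ne'
    simp [this]
  -- `∫ f h = Σ_G a²`
  have hfh : ∫ x, f x * h x = ∑ P ∈ G, a P ^ 2 := by
    have e : ∀ x, f x * h x = ∑ P ∈ G, a P * (f x * φ P x) := by
      intro x
      rw [hh, Finset.mul_sum]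
      exact Finset.sum_congr rfl (fun P _ => by ring)
    simp_rw [e]
    rw [integral_finsetSum _ (fun P hP => (hint_f P (hGT hP)).const_mul _)]
    refine Finset.sum_congr rfl (fun P hP => ?_)
    rw [integral_const_mul, ← ha P (hGT hP), sq]
  have hh2e : ∀ x, h x ^ 2 = ∑ P ∈ G, ∑ Q ∈ G, a P * a Q * (φ P x * φ Q x) := by
    intro x
    rw [sq, hh, Finset.sum_mul_sum]
    exact Finset.sum_congr rfl (fun P _ => Finset.sum_congr rfl (fun Q _ => by ring))
  have hh2int : Integrable (fun x => h x ^ 2) := by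
    simp_rw [hh2e]
    exact integrable_finsetSum _ (fun P hP => integrable_finsetSum _ (fun Q hQ =>
      (hint_φ P (hGT hP) Q (hGT hQ)).const_mul _))
  have hhh : ∫ x, h x ^ 2 = ∑ P ∈ G, a P ^ 2 := by
    simp_rw [hh2e]
    rw [integral_finsetSum _ (fun P hP => integrable_finsetSum _ (fun Q hQ =>
      (hint_φ P (hGT hP) Q (hGT hQ)).const_mul _))]
    refine Finset.sum_congr rfl (fun P hP => ?_)
    rw [integral_finsetSum _ (fun Q hQ => (hint_φ P (hGT hP) Q (hGT hQ)).const_mul _)]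
    rw [Finset.sum_eq_single P]
    · rw [integral_const_mul, hnorm P (hGT hP)]; ring
    · intro Q hQ hQP
      rw [integral_const_mul, horth P (hGT hP) Q (hGT hQ) (Ne.symm hQP), mul_zero]
    · intro hn; exact absurd hP hn
  -- pointwise bound
  have haA : ∀ P ∈ T, ∀ x ∈ I P, |a P * φ P x| ≤ A := by
    intro P hP x hx
    have h1 : a P ^ 2 ≤ A ^ 2 * len P := by
      refine le_trans ?_ (hA P hP)
      exact Finset.single_le_sum (f := fun P => a P ^ 2) (fun Q _ => sq_nonneg _)
        (Finset.mem_filter.2 ⟨hP, subset_rfl⟩)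
    have h2 : (a P * φ P x) ^ 2 ≤ A ^ 2 := by
      rw [mul_pow, hφ1 P hP x hx, mul_one_div, div_le_iff₀ (hpos P hP)]
      exact h1
    exact abs_le_of_sq_le_sq h2 hA0
  have hhle : ∀ x, |h x| ≤ 2 * A := by
    intro x
    by_cases hne : (G.filter (fun P => x ∈ I P)).Nonempty
    · obtain ⟨P, hP, hPm⟩ := Finset.exists_min_image _ len hne
      rw [Finset.mem_filter] at hP
      have hPT := hGT hP.1
      have hPg : good P := (Finset.mem_filter.1 hP.1).2
      have e : h x = g P x + a P * φ P x := by
        have e1 : h x = ∑ Q ∈ G with x ∈ I Q, a Q * φ Q x := by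
          rw [hh, Finset.sum_filter]
          refine Finset.sum_congr rfl (fun Q hQ => ?_)
          split_ifs with hx
          · rfl
          · rw [hφ0 Q (hGT hQ) x hx, mul_zero]
        have e2 : G.filter (fun Q => x ∈ I Q) = insert P (T.filter (fun R => I P ⊂ I R)) := by
          ext Q
          simp only [Finset.mem_filter, Finset.mem_insert]
          constructor
          · rintro ⟨hQ, hx⟩
            by_cases hQP : Q = P
            · left; exact hQP
            · right
              refine ⟨hGT hQ, ?_⟩
              rcases hnest Q (hGT hQ) P hPT hQP with hd | hd | hd
              · exact absurd hP.2 (Set.disjoint_left.1 hd hx)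
              · have h1 := hmono Q (hGT hQ) P hPT hd
                have h2 := hPm Q (Finset.mem_filter.2 ⟨hQ, hx⟩)
                linarith
              · exact hd
          · rintro (rfl | ⟨hQ, hx⟩)
            · exact hP
            · exact ⟨Finset.mem_filter.2 ⟨hQ, hgoodup P hPT Q hQ hx.subset hPg⟩, hx.subset hP.2⟩
        rw [e1, e2, Finset.sum_insert]
        · rw [hg]; ring
        · simp
      rw [e]
      have h1 := hPg P hPT subset_rfl x hP.2
      have h2 := haA P hPT x hP.2
      calc _ ≤ |g P x| + |a P * φ P x| := abs_add_le _ _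
        _ ≤ _ := by linarith
    · have : h x = 0 := by
        rw [hh]
        refine Finset.sum_eq_zero (fun P hP => ?_)
        rw [hφ0 P (hGT hP) x, mul_zero]
        intro hx
        exact hne ⟨P, Finset.mem_filter.2 ⟨hP, hx⟩⟩
      rw [this]; simp [hA0]
  have hhJ : ∀ x, x ∉ J → h x = 0 := by
    intro x hx
    refine Finset.sum_eq_zero (fun P hP => ?_)
    rw [hφ0 P (hGT hP) x, mul_zero]
    exact fun hx' => hx (hJ P (hGT hP) hx')
  have hEJ : volume (E ∩ J) ≠ ⊤ := measure_ne_top_of_subset Set.inter_subset_left hEfin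
  have hGsum : ∑ P ∈ G, a P ^ 2 ≤ 2 * A * (volume (E ∩ J)).toReal := by
    rw [← hfh]
    have e : (fun x => f x * h x) = (E ∩ J).indicator (fun x => f x * h x) := by
      funext x
      by_cases hx : x ∈ E ∩ J
      · rw [Set.indicator_of_mem hx]
      · rw [Set.indicator_of_notMem hx]
        by_cases hxE : x ∈ E
        · rw [hhJ x (fun hxJ => hx ⟨hxE, hxJ⟩), mul_zero]
        · rw [hfE x hxE, zero_mul]
    rw [e, integral_indicator (hE.inter hJm)]
    refine le_trans (le_abs_self _) ?_
    rw [← Real.norm_eq_abs]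
    refine norm_setIntegral_le_of_norm_le_const (lt_top_iff_ne_top.2 hEJ) (fun x _ => ?_)
    rw [Real.norm_eq_abs, abs_mul]
    nlinarith [hf1 x, hhle x, abs_nonneg (h x), abs_nonneg (f x)]
  -- bad sum
  have hhm : Measurable h := by
    rw [hh]
    exact Finset.measurable_fun_sum _ (fun P hP => (hφm P (hGT hP)).const_mul _)
  set K : Set ℝ := ⋃ P ∈ T, I P with hK
  have hKm : MeasurableSet K := Finset.measurableSet_biUnion _ hI
  have hKfin : volume K ≠ ⊤ := by
    refine ne_top_of_le_ne_top ?_ (measure_biUnion_finset_le T I)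
    exact ENNReal.sum_ne_top.2 hfin
  set U : Set ℝ := K ∩ {x | A ^ 2 ≤ h x ^ 2} with hU
  have hUm : MeasurableSet U := hKm.inter (measurableSet_le measurable_const (hhm.pow_const 2))
  have hUfin : volume U ≠ ⊤ := measure_ne_top_of_subset Set.inter_subset_left hKfin
  have hBU : ∀ P ∈ B, (∀ Q ∈ B, ¬ I P ⊂ I Q) → I P ⊆ U := by
    intro P hP hPmax
    obtain ⟨hPT, hPbad⟩ := Finset.mem_filter.1 hP
    have hbad := hPbad
    simp only [hgood] at hbad
    push Not at hbad
    obtain ⟨Q, hQ, hPQ, y, hy, hyA⟩ := hbad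
    have hQbad : ¬ good Q := fun hgd => by
      have := hgd Q hQ subset_rfl y hy
      linarith
    have hPeq : Q = P := by
      by_contra hne
      have hQB : Q ∈ B := Finset.mem_filter.2 ⟨hQ, hQbad⟩
      rcases hnest Q hQ P hPT hne with hd | hd | hd
      · have he : I P = ∅ := disjoint_self.1 (hd.mono_left hPQ)
        have h1 := hlen P hPT
        rw [he, measure_empty] at h1
        have h0 := ENNReal.ofReal_pos.2 (hpos P hPT)
        rw [← h1] at h0
        exact lt_irrefl _ h0
      · exact absurd (hd.subset.antisymm hPQ) hd.ne
      · exact hPmax Q hQB hd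
    subst hPeq
    intro x hx
    refine ⟨Set.mem_biUnion hQ hx, ?_⟩
    have e : h x = g Q x := by
      have e1 : h x = ∑ R ∈ G with x ∈ I R, a R * φ R x := by
        rw [hh, Finset.sum_filter]
        refine Finset.sum_congr rfl (fun R hR => ?_)
        split_ifs with hx
        · rfl
        · rw [hφ0 R (hGT hR) x hx, mul_zero]
      have e2 : G.filter (fun R => x ∈ I R) = T.filter (fun R => I Q ⊂ I R) := by
        ext R
        simp only [Finset.mem_filter]
        constructor
        · rintro ⟨hR, hxR⟩
          obtain ⟨hRT, hRg⟩ := Finset.mem_filter.1 hR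
          refine ⟨hRT, ?_⟩
          have hne : R ≠ Q := by rintro rfl; exact hQbad hRg
          rcases hnest R hRT Q hQ hne with hd | hd | hd
          · exact absurd hx (Set.disjoint_left.1 hd hxR)
          · exact absurd (hgoodup R hRT Q hQ hd.subset hRg) hQbad
          · exact hd
        · rintro ⟨hR, hxR⟩
          refine ⟨Finset.mem_filter.2 ⟨hR, ?_⟩, hxR.subset hx⟩
          by_contra hRb
          exact hPmax R (Finset.mem_filter.2 ⟨hR, hRb⟩) hxR
      rw [e1, e2]
    obtain ⟨ε, hε, hεe⟩ := hconst Q hQ x hx y hy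
    have e3 : g Q x = ε * g Q y := by
      rw [hg]
      simp only
      rw [Finset.mul_sum]
      refine Finset.sum_congr rfl (fun R hR => ?_)
      rw [hεe R (Finset.mem_filter.1 hR).1 (Finset.mem_filter.1 hR).2]; ring
    show A ^ 2 ≤ h x ^ 2
    rw [e, e3, ← sq_abs (ε * g Q y), abs_mul, hε, one_mul]
    exact pow_le_pow_left₀ hA0 hyA.le 2
  have hBsum : ∑ P ∈ B, a P ^ 2 ≤ A ^ 2 * (volume U).toReal :=
    carleson_pack T B hBT I len (fun P => a P ^ 2) hI hlen hpos hmono hnest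
      (fun P _ => sq_nonneg _) (A ^ 2) (sq_nonneg _) hA U hUfin hBU
  have hUle : A ^ 2 * (volume U).toReal ≤ ∫ x, h x ^ 2 := by
    calc A ^ 2 * (volume U).toReal = ∫ _x in U, A ^ 2 := by
          rw [setIntegral_const, measureReal_def, smul_eq_mul, mul_comm]
      _ ≤ ∫ x in U, h x ^ 2 := by
          refine setIntegral_mono_on (integrableOn_const hUfin) hh2int.integrableOn hUm
            (fun x hx => hx.2)
      _ ≤ ∫ x, h x ^ 2 := setIntegral_le_integral hh2int
          (Filter.Eventually.of_forall (fun x => sq_nonneg _))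
  have hsplit : ∑ P ∈ T, a P ^ 2 = ∑ P ∈ G, a P ^ 2 + ∑ P ∈ B, a P ^ 2 := by
    rw [hG, hB, Finset.sum_filter_add_sum_filter_not]
  rw [hhh] at hUle
  rw [hsplit]
  linarith

open Classical in
lemma tree_bound {ι : Type*} (T : Finset ι) (I : ι → Set ℝ) (len : ι → ℝ) (φ : ι → ℝ → ℝ)
    (hI : ∀ P ∈ T, MeasurableSet (I P)) (hlen : ∀ P ∈ T, volume (I P) = ENNReal.ofReal (len P))
    (hpos : ∀ P ∈ T, 0 < len P)
    (hmono : ∀ P ∈ T, ∀ Q ∈ T, I P ⊂ I Q → len P < len Q)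
    (hnest : ∀ P ∈ T, ∀ Q ∈ T, P ≠ Q → Disjoint (I P) (I Q) ∨ I P ⊂ I Q ∨ I Q ⊂ I P)
    (hφm : ∀ P ∈ T, Measurable (φ P))
    (hφ0 : ∀ P ∈ T, ∀ x, x ∉ I P → φ P x = 0)
    (hφ1 : ∀ P ∈ T, ∀ x ∈ I P, φ P x ^ 2 = 1 / len P)
    (horth : ∀ P ∈ T, ∀ Q ∈ T, P ≠ Q → ∫ x, φ P x * φ Q x = 0)
    (hconst : ∀ P ∈ T, ∀ x ∈ I P, ∀ y ∈ I P, ∃ e : ℝ, |e| = 1 ∧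
      ∀ Q ∈ T, I P ⊂ I Q → φ Q x = e * φ Q y)
    (E : Set ℝ) (hE : MeasurableSet E) (hEfin : volume E ≠ ⊤)
    (f : ℝ → ℝ) (hf : Measurable f) (hf1 : ∀ x, |f x| ≤ 1) (hfE : ∀ x, x ∉ E → f x = 0)
    (a : ι → ℝ) (ha : ∀ P ∈ T, a P = ∫ x, f x * φ P x)
    (δ : ℝ) (hδ0 : 0 ≤ δ) (hδ : ∀ P ∈ T, (volume (E ∩ I P)).toReal ≤ δ * len P)
    (J : Set ℝ) (hJfin : volume J ≠ ⊤) (hJ : ∀ P ∈ T, I P ⊆ J) :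
    ∑ P ∈ T, a P ^ 2 ≤ (4 * δ) ^ 2 * (volume J).toReal := by
  rcases T.eq_empty_or_nonempty with rfl | hne
  · simp; positivity
  obtain ⟨Q, hQ, hQm⟩ := Finset.exists_max_image T
    (fun Q => (∑ P ∈ T with I P ⊆ I Q, a P ^ 2) / len Q) hne
  set m := (∑ P ∈ T with I P ⊆ I Q, a P ^ 2) / len Q with hm
  have hm0 : 0 ≤ m := div_nonneg (Finset.sum_nonneg (fun _ _ => sq_nonneg _)) (hpos Q hQ).le
  have hMall : ∀ R ∈ T, ∑ P ∈ T with I P ⊆ I R, a P ^ 2 ≤ m * len R := by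
    intro R hR
    exact (div_le_iff₀ (hpos R hR)).1 (hQm R hR)
  have hsq : Real.sqrt m ^ 2 = m := Real.sq_sqrt hm0
  set T0 := T.filter (fun P => I P ⊆ I Q) with hT0
  have hs : ∀ P ∈ T0, P ∈ T := fun P hP => (Finset.mem_filter.1 hP).1
  have key := stopping_bound T0 I len φ (fun P hP => hI P (hs P hP)) (fun P hP => hlen P (hs P hP))
    (fun P hP => hpos P (hs P hP)) (fun P hP Q hQ => hmono P (hs P hP) Q (hs Q hQ))
    (fun P hP Q hQ => hnest P (hs P hP) Q (hs Q hQ)) (fun P hP => hφm P (hs P hP))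
    (fun P hP => hφ0 P (hs P hP)) (fun P hP => hφ1 P (hs P hP))
    (fun P hP Q hQ => horth P (hs P hP) Q (hs Q hQ))
    (fun P hP x hx y hy => by
      obtain ⟨e, he, h⟩ := hconst P (hs P hP) x hx y hy
      exact ⟨e, he, fun Q hQ => h Q (hs Q hQ)⟩)
    E hE hEfin f hf hf1 hfE a (fun P hP => ha P (hs P hP)) (Real.sqrt m) (Real.sqrt_nonneg _)
    (fun R hR => by
      rw [hsq]
      refine le_trans (Finset.sum_le_sum_of_subset_of_nonneg ?_ (fun _ _ _ => sq_nonneg _))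
        (hMall R (hs R hR))
      exact Finset.filter_subset_filter _ (Finset.filter_subset _ _))
    (I Q) (hI Q hQ) (fun P hP => (Finset.mem_filter.1 hP).2)
  have h1 : ∑ P ∈ T0, a P ^ 2 = m * len Q := by
    rw [hm, div_mul_cancel₀ _ (hpos Q hQ).ne']
  rw [h1] at key
  have h2 := hδ Q hQ
  have hA : Real.sqrt m ≤ 4 * δ := by
    by_contra hcon
    push Not at hcon
    have hApos : 0 < Real.sqrt m := by linarith
    have h3 : Real.sqrt m ^ 2 * len Q ≤ 4 * Real.sqrt m * (δ * len Q) := by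
      rw [hsq]
      refine key.trans ?_
      exact mul_le_mul_of_nonneg_left h2 (by positivity)
    have h4 : 0 < Real.sqrt m * len Q := mul_pos hApos (hpos Q hQ)
    nlinarith
  have hmle : m ≤ (4 * δ) ^ 2 := by
    rw [← hsq]
    exact pow_le_pow_left₀ (Real.sqrt_nonneg _) hA 2
  refine carleson_pack T T subset_rfl I len (fun P => a P ^ 2) hI hlen hpos hmono hnest
      (fun P _ => sq_nonneg _) ((4*δ)^2) (sq_nonneg _) (fun R hR => ?_) J hJfin
      (fun P hP _ => hJ P hP)
  exact (hMall R hR).trans (mul_le_mul_of_nonneg_right hmle (hpos R hR).le)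

/-! ### Dyadic geometry -/

lemma mem_dyadic (k n : ℤ) (x : ℝ) :
    x ∈ Set.Ico ((2:ℝ)^(-k) * n) ((2:ℝ)^(-k) * (n+1)) ↔ ⌊(2:ℝ)^k * x⌋ = n := by
  have h : (0:ℝ) < 2^k := by positivity
  rw [Int.floor_eq_iff, Set.mem_Ico, zpow_neg, inv_mul_le_iff₀ h, lt_inv_mul_iff₀ h]

lemma floor_scale (k k' : ℤ) (d : ℕ) (hk : k = k' + d) (x : ℝ) :
    ⌊(2:ℝ)^k' * x⌋ = ⌊(2:ℝ)^k * x⌋ / 2^d := by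
  have e : (2:ℝ)^k' * x = (2:ℝ)^k * x / ((2^d : ℕ) : ℝ) := by
    rw [hk, zpow_add₀ (by norm_num), zpow_natCast]; push_cast; field_simp
  rw [e, Int.floor_div_natCast]; push_cast; rfl

lemma Quartile.mem_I (P : Quartile) (x : ℝ) : x ∈ P.I ↔ ⌊(2:ℝ)^P.k * x⌋ = P.n :=
  mem_dyadic _ _ _

lemma Quartile.I_nonempty (P : Quartile) : ∃ x, x ∈ P.I := by
  refine ⟨(2:ℝ)^(-P.k) * P.n, ?_⟩
  have h : (0:ℝ) < 2^(-P.k) := by positivity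
  simp only [Quartile.I, Set.mem_Ico, le_refl, true_and]
  nlinarith

lemma Quartile.len_pos (P : Quartile) : 0 < P.len := by
  unfold Quartile.len; positivity

lemma Quartile.I_volume (P : Quartile) : volume P.I = ENNReal.ofReal P.len := by
  unfold Quartile.I Quartile.len
  rw [Real.volume_Ico]; congr 1; ring

lemma Quartile.I_meas (P : Quartile) : MeasurableSet P.I := measurableSet_Ico

lemma Quartile.sub_of_le {P Q : Quartile} {x : ℝ} (hP : x ∈ P.I) (hQ : x ∈ Q.I)
    (hk : Q.k ≤ P.k) : P.I ⊆ Q.I := by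
  intro y hy
  obtain ⟨d, hd⟩ := Int.eq_ofNat_of_zero_le (sub_nonneg.2 hk)
  rw [Quartile.mem_I] at *
  rw [floor_scale P.k Q.k d (by omega)] at *
  rw [hy, ← hP, hQ]

lemma Quartile.lt_of_ssub {P Q : Quartile} (h : P.I ⊂ Q.I) : Q.k < P.k := by
  by_contra hcon
  push Not at hcon
  obtain ⟨x, hx⟩ := P.I_nonempty
  exact h.not_subset (Quartile.sub_of_le (h.subset hx) hx hcon)

lemma Quartile.len_lt {P Q : Quartile} (h : Q.k < P.k) : P.len < Q.len := by
  unfold Quartile.len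
  exact zpow_lt_zpow_right₀ (by norm_num) (by omega)

/-! ### Wave packets -/

lemma wp_meas (p : Tile) : Measurable p.wp := by
  unfold Tile.wp
  have := walsh_meas p.l.toNat
  fun_prop

lemma wp_out (P : Quartile) (j : ℕ) (x : ℝ) (hx : x ∉ P.I) : (P.tile j).wp x = 0 := by
  rw [Quartile.mem_I, Int.floor_eq_iff] at hx
  simp only [Tile.wp, Quartile.tile]
  rw [walsh_out, mul_zero]
  intro h
  apply hx
  constructor <;> linarith [h.1, h.2]

lemma mem_unit (P : Quartile) (x : ℝ) (hx : x ∈ P.I) :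
    (2:ℝ)^P.k * x - P.n ∈ Set.Ico (0:ℝ) 1 := by
  rw [Quartile.mem_I, Int.floor_eq_iff] at hx
  constructor <;> linarith [hx.1, hx.2]

lemma wp_sq (P : Quartile) (j : ℕ) (x : ℝ) (hx : x ∈ P.I) :
    (P.tile j).wp x ^ 2 = 1 / P.len := by
  simp only [Tile.wp, Quartile.tile, Quartile.len]
  rw [mul_pow, Real.sq_sqrt (by positivity), ← sq_abs (walsh _ _), walsh_abs _ _ (mem_unit P x hx)]
  simp

lemma wp_orth (P : Quartile) (hP : 0 ≤ P.l) (i j : ℕ) (h : i - 1 ≠ j - 1) :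
    ∫ x, (P.tile j).wp x * (P.tile i).wp x = 0 := by
  simp only [Tile.wp, Quartile.tile]
  set a := (4 * P.l + ((j - 1 : ℕ) : ℤ)).toNat with ha
  set b := (4 * P.l + ((i - 1 : ℕ) : ℤ)).toNat with hb
  have hab : a ≠ b := by omega
  have e : ∀ x : ℝ, √((2:ℝ) ^ P.k) * walsh a (2 ^ P.k * x - P.n) *
      (√((2:ℝ) ^ P.k) * walsh b (2 ^ P.k * x - P.n)) = (√((2:ℝ) ^ P.k))^2 *
      (fun y => walsh a (y - P.n) * walsh b (y - P.n)) ((2:ℝ)^P.k * x) := by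
    intro x; simp only; ring
  simp_rw [e]
  rw [integral_const_mul,
    Measure.integral_comp_mul_left (fun y => walsh a (y - P.n) * walsh b (y - P.n)),
    integral_sub_right_eq_self (fun y => walsh a y * walsh b y), walsh_orth _ a b rfl hab]
  simp

/-- In a tree with frequencies `ξ`, the wave packet of a larger quartile is, on a smaller interval,
a multiple of the wave packet of the `i`-th sub-tile. -/
lemma wp_restrict (P Q : Quartile) (hQ : 0 ≤ Q.l) (i j : ℕ) (hi : i - 1 < 4) (hj : j - 1 < 4)
    (ξ : ℝ)
    (hPξ : ⌊(2:ℝ)^(-P.k) * ξ⌋ = 4 * P.l + ((i - 1 : ℕ) : ℤ))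
    (hQξ : ⌊(2:ℝ)^(-Q.k) * ξ⌋ = 4 * Q.l + ((i - 1 : ℕ) : ℤ))
    (hpar : P.k % 2 = Q.k % 2) (h : P.I ⊂ Q.I) :
    ∃ c : ℝ, ∀ x ∈ P.I, (Q.tile j).wp x = c * (P.tile i).wp x := by
  have hk := Quartile.lt_of_ssub h
  obtain ⟨d, hd⟩ : ∃ d : ℕ, P.k = Q.k + ((d + 2 : ℕ) : ℤ) := by
    refine ⟨(P.k - Q.k - 2).toNat, ?_⟩
    push_cast
    omega
  have hl := floor_scale (-Q.k) (-P.k) (d+2) (by omega) ξ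
  rw [hPξ, hQξ] at hl
  have hdiv : ∀ t : ℕ, t < 4 → (4 * Q.l + (t:ℤ)) / 2^(d+2) = Q.l / 2^d := by
    intro t ht
    have e : (2:ℤ)^(d+2) = 4 * 2^d := by ring
    rw [e, ← Int.ediv_ediv_of_nonneg (by norm_num)]
    congr 1
    omega
  rw [hdiv _ hi, ← hdiv _ hj] at hl
  set L := (4 * Q.l + ((j - 1 : ℕ) : ℤ)).toNat with hL
  have hLZ : ((L:ℕ) : ℤ) = 4 * Q.l + ((j - 1 : ℕ) : ℤ) := by omega
  have hL2 : (4 * P.l + ((i - 1 : ℕ) : ℤ)).toNat = L / 2^(d+2) := by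
    rw [hl, ← hLZ]
    have : ((L:ℤ) / 2^(d+2)) = ((L / 2^(d+2) : ℕ) : ℤ) := by push_cast; rfl
    rw [this, Int.toNat_natCast]
  obtain ⟨x0, hx0⟩ := P.I_nonempty
  have hn : Q.n = P.n / 2^(d+2) := by
    have h1 := (Quartile.mem_I P x0).1 hx0
    have h2 := (Quartile.mem_I Q x0).1 (h.subset hx0)
    rw [floor_scale P.k Q.k (d+2) hd, h1] at h2
    exact h2.symm
  have hp : (0:ℤ) < 2^(d+2) := by positivity
  have hr0 := Int.emod_nonneg P.n hp.ne'
  have hr1 := Int.emod_lt_of_pos P.n hp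
  obtain ⟨r, hr⟩ := Int.eq_ofNat_of_zero_le hr0
  have hrlt : r < 2^(d+2) := by
    rw [hr] at hr1; exact_mod_cast hr1
  have hnr : P.n = 2^(d+2) * Q.n + r := by
    rw [hn, ← hr]; exact (Int.mul_ediv_add_emod P.n (2^(d+2))).symm
  have hnrR : (P.n:ℝ) = 2^(d+2) * Q.n + r := by exact_mod_cast hnr
  obtain ⟨s, hs, hw⟩ := walsh_restrict (d+2) L r hrlt
  refine ⟨√((2:ℝ)^Q.k) * s / √((2:ℝ)^P.k), fun x hx => ?_⟩
  have hne : √((2:ℝ)^P.k) ≠ 0 := (Real.sqrt_pos.2 (by positivity)).ne'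
  have hy : (2:ℝ)^(d+2) * ((2:ℝ)^Q.k * x - Q.n) - r = (2:ℝ)^P.k * x - P.n := by
    rw [hnrR, hd, zpow_add₀ (by norm_num), zpow_natCast]; ring
  have h3 := hw ((2:ℝ)^Q.k * x - Q.n) (by rw [hy]; exact mem_unit P x hx)
  rw [hy, ← hL2] at h3
  simp only [Tile.wp, Quartile.tile]
  rw [← hL, h3]
  field_simp

lemma class_bound (T : Finset Quartile) (hT0 : ∀ P ∈ T, 0 ≤ P.l) (i j : ℕ) (hi : i - 1 < 4)
    (hj : j - 1 < 4) (hij : i - 1 ≠ j - 1) (ξ : ℝ)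
    (hξ : ∀ P ∈ T, ⌊(2:ℝ)^(-P.k) * ξ⌋ = 4 * P.l + ((i - 1 : ℕ) : ℤ))
    (hpar : ∀ P ∈ T, ∀ Q ∈ T, P.k % 2 = Q.k % 2)
    (E : Set ℝ) (hE : MeasurableSet E) (hEfin : volume E ≠ ⊤)
    (f : ℝ → ℝ) (hf : Measurable f) (hf1 : ∀ x, |f x| ≤ 1) (hfE : ∀ x, x ∉ E → f x = 0)
    (δ : ℝ) (hδ0 : 0 ≤ δ) (hδ : ∀ P ∈ T, (volume (E ∩ P.I)).toReal ≤ δ * P.len)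
    (J : Set ℝ) (hJfin : volume J ≠ ⊤) (hJ : ∀ P ∈ T, P.I ⊆ J) :
    ∑ P ∈ T, (∫ x, f x * (P.tile j).wp x) ^ 2 ≤ (4 * δ) ^ 2 * (volume J).toReal := by
  have hnest : ∀ P ∈ T, ∀ Q ∈ T, P ≠ Q → Disjoint P.I Q.I ∨ P.I ⊂ Q.I ∨ Q.I ⊂ P.I := by
    intro P hP Q hQ hPQ
    by_cases hd : Disjoint P.I Q.I
    · left; exact hd
    right
    obtain ⟨x, hxP, hxQ⟩ := Set.not_disjoint_iff.1 hd
    have hstrict : ∀ R S : Quartile, x ∈ R.I → x ∈ S.I → S.k < R.k → R.I ⊂ S.I := by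
      intro R S hR hS hk
      refine (Quartile.sub_of_le hR hS hk.le).ssubset_of_ne (fun he => ?_)
      have h1 := R.I_volume
      rw [he, S.I_volume] at h1
      have h2 := Quartile.len_lt hk
      have := (ENNReal.ofReal_eq_ofReal_iff S.len_pos.le R.len_pos.le).1 h1
      linarith
    rcases lt_trichotomy P.k Q.k with hk | hk | hk
    · right; exact hstrict Q P hxQ hxP hk
    · exfalso
      apply hPQ
      have h1 := (Quartile.mem_I P x).1 hxP
      have h2 := (Quartile.mem_I Q x).1 hxQ
      have h3 := hξ P hP
      have h4 := hξ Q hQ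
      rw [hk] at h1 h3
      rcases P with ⟨k, n, l⟩
      rcases Q with ⟨k', n', l'⟩
      simp only at *
      rw [Quartile.mk.injEq]
      refine ⟨hk, by omega, by omega⟩
    · left; exact hstrict P Q hxP hxQ hk
  have hres : ∀ P ∈ T, ∀ Q ∈ T, P.I ⊂ Q.I →
      ∃ c : ℝ, ∀ x ∈ P.I, (Q.tile j).wp x = c * (P.tile i).wp x := fun P hP Q hQ h =>
    wp_restrict P Q (hT0 Q hQ) i j hi hj ξ (hξ P hP) (hξ Q hQ) (hpar P hP Q hQ) h
  have hor : ∀ P ∈ T, ∀ Q ∈ T, P.I ⊂ Q.I → ∫ x, (P.tile j).wp x * (Q.tile j).wp x = 0 := by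
    intro P hP Q hQ h
    obtain ⟨c, hc⟩ := hres P hP Q hQ h
    have e : ∀ x, (P.tile j).wp x * (Q.tile j).wp x = c * ((P.tile j).wp x * (P.tile i).wp x) := by
      intro x
      by_cases hx : x ∈ P.I
      · rw [hc x hx]; ring
      · rw [wp_out P j x hx]; ring
    simp_rw [e]
    rw [integral_const_mul, wp_orth P (hT0 P hP) i j hij, mul_zero]
  refine tree_bound T Quartile.I Quartile.len (fun P => (P.tile j).wp) (fun P _ => P.I_meas)
    (fun P _ => P.I_volume) (fun P _ => P.len_pos)
    (fun P _ Q _ h => Quartile.len_lt (Quartile.lt_of_ssub h)) hnest (fun P _ => wp_meas _)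
    (fun P _ x hx => wp_out P j x hx) (fun P _ x hx => wp_sq P j x hx) ?_ ?_
    E hE hEfin f hf hf1 hfE _ (fun P _ => rfl) δ hδ0 hδ J hJfin hJ
  · intro P hP Q hQ hPQ
    rcases hnest P hP Q hQ hPQ with h | h | h
    · have e : ∀ x, (P.tile j).wp x * (Q.tile j).wp x = 0 := by
        intro x
        by_cases hx : x ∈ P.I
        · rw [wp_out Q j x (Set.disjoint_left.1 h hx), mul_zero]
        · rw [wp_out P j x hx, zero_mul]
      simp [e]
    · exact hor P hP Q hQ h
    · have := hor Q hQ P hP h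
      simpa [mul_comm] using this
  · intro P hP x hx y hy
    have h1 := wp_sq P i x hx
    have h2 := wp_sq P i y hy
    have hl := P.len_pos
    have hy0 : (P.tile i).wp y ≠ 0 := by
      intro h0
      rw [h0] at h2
      have : 0 < 1 / P.len := by positivity
      norm_num at h2
      exact hl.ne' h2.symm
    refine ⟨(P.tile i).wp x / (P.tile i).wp y, ?_, ?_⟩
    · rw [abs_div, div_eq_one_iff_eq (by simpa using hy0)]
      exact (sq_eq_sq_iff_abs_eq_abs _ _).1 (h1.trans h2.symm)
    · intro Q hQ h
      obtain ⟨c, hc⟩ := hres P hP Q hQ h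
      show (Q.tile j).wp x = _ * (Q.tile j).wp y
      rw [hc x hx, hc y hy]
      field_simp

/-- the size of the coefficients of `f ∈ X(E)` is bounded by
`sup_{P∈Ps} |E ∩ I_P|/|I_P|`, with an absolute constant. -/
theorem size_le_density :
    ∃ C : ℝ, 0 < C ∧ ∀ (Ps : Finset Quartile), (∀ P ∈ Ps, 0 ≤ P.l) →
      ∀ j ∈ ({1,2,3} : Set ℕ), ∀ E : Set ℝ, MeasurableSet E → volume E < ⊤ →
      ∀ f : ℝ → ℝ, Measurable f → (∀ x, |f x| ≤ 1) → (∀ x, x ∉ E → f x = 0) →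
      size Ps j (fun P => ((∫ x : ℝ, f x * (P.tile j).wp x : ℝ) : ℂ)) ≤
        C * sSup ((fun P : Quartile =>
          (volume (E ∩ P.I)).toReal / P.len) '' (Ps : Set Quartile)) := by
  refine ⟨6, by norm_num, ?_⟩
  intro Ps hPs j hj E hE hEfin f hf hf1 hfE
  set D := (fun P : Quartile => (volume (E ∩ P.I)).toReal / P.len) '' (Ps : Set Quartile) with hD
  set δ := sSup D with hδdef
  have hδ0 : 0 ≤ δ := by
    apply Real.sSup_nonneg
    rintro _ ⟨P, _, rfl⟩
    exact div_nonneg ENNReal.toReal_nonneg P.len_pos.le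
  have hbdd : BddAbove D := (Ps.finite_toSet.image _).bddAbove
  have hδ : ∀ P ∈ Ps, (volume (E ∩ P.I)).toReal ≤ δ * P.len := by
    intro P hP
    rw [← div_le_iff₀ P.len_pos]
    exact le_csSup hbdd ⟨P, hP, rfl⟩
  unfold size
  apply Real.sSup_le _ (by positivity)
  rintro _ ⟨⟨top, T⟩, ⟨hTP, i, hi, hij, hT⟩, rfl⟩
  simp only at hTP hT ⊢
  have hi' : i - 1 < 4 := by simp at hi; omega
  have hj' : j - 1 < 4 := by simp at hj; omega
  have hij' : i - 1 ≠ j - 1 := by simp at hi hj; omega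
  set t := top.tile i with ht
  set ξ : ℝ := (2:ℝ)^t.k * t.l with hξ
  have hξmem : ξ ∈ t.freq := by
    have h : (0:ℝ) < 2^t.k := by positivity
    simp only [Tile.freq, Set.mem_Ico, hξ, le_refl, true_and]
    nlinarith
  have hTξ : ∀ P ∈ T, ⌊(2:ℝ)^(-P.k) * ξ⌋ = 4 * P.l + ((i - 1 : ℕ) : ℤ) := by
    intro P hP
    have hmem : ξ ∈ (P.tile i).freq := by
      rcases hT P hP with h | h
      · exact h.2 hξmem
      · rw [h]; exact hξmem
    have h1 := (mem_dyadic (-(P.tile i).k) (P.tile i).l ξ).1 (by rw [neg_neg]; exact hmem)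
    exact h1
  have hTI : ∀ P ∈ T, P.I ⊆ top.I := by
    intro P hP
    rcases hT P hP with h | h
    · exact h.1.subset
    · have : (P.tile i).I = (top.tile i).I := by rw [h]
      exact (show P.I = top.I from this).subset
  have htopfin : volume top.I ≠ ⊤ := by rw [top.I_volume]; simp
  have htopvol : (volume top.I).toReal = top.len := by
    rw [top.I_volume, ENNReal.toReal_ofReal top.len_pos.le]
  have hclass : ∀ p : ℤ, ∑ P ∈ T with P.k % 2 = p, (∫ x, f x * (P.tile j).wp x) ^ 2 ≤
      (4 * δ) ^ 2 * top.len := by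
    intro p
    rw [← htopvol]
    have hs : ∀ P ∈ T.filter (fun P => P.k % 2 = p), P ∈ T := fun P hP => (Finset.mem_filter.1 hP).1
    refine class_bound _ (fun P hP => hPs P (hTP (hs P hP))) i j hi' hj' hij' ξ
      (fun P hP => hTξ P (hs P hP)) ?_ E hE hEfin.ne f hf hf1 hfE δ hδ0
      (fun P hP => hδ P (hTP (hs P hP))) top.I htopfin (fun P hP => hTI P (hs P hP))
    intro P hP Q hQ
    rw [(Finset.mem_filter.1 hP).2, (Finset.mem_filter.1 hQ).2]
  have hsum : ∑ P ∈ T, (∫ x, f x * (P.tile j).wp x) ^ 2 ≤ 2 * ((4 * δ) ^ 2 * top.len) := by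
    rw [← Finset.sum_filter_add_sum_filter_not T (fun P => P.k % 2 = 0)]
    have e : T.filter (fun P => ¬ P.k % 2 = 0) = T.filter (fun P => P.k % 2 = 1) := by
      apply Finset.filter_congr
      intro P _
      omega
    rw [e]
    linarith [hclass 0, hclass 1]
  have hnorm : ∀ P : Quartile, ‖((∫ x : ℝ, f x * (P.tile j).wp x : ℝ) : ℂ)‖ ^ 2 =
      (∫ x, f x * (P.tile j).wp x) ^ 2 := by
    intro P
    rw [Complex.norm_real, Real.norm_eq_abs, sq_abs]
  simp_rw [hnorm]
  apply Real.sqrt_le_iff.2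
  refine ⟨by positivity, ?_⟩
  rw [div_le_iff₀ top.len_pos]
  refine hsum.trans ?_
  have := mul_nonneg (sq_nonneg δ) top.len_pos.le
  nlinarith
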